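/- A quiver datum (V, p) is extremizable if and only if there exists a tuple Y = (Y_1,…,Y_m) of real positive definite matrices, Y_j of size n_j×n_j, such that M_i := ∑_{j=1}^m p_j ∑_{a∈𝒜_{ij}} V_aᵀ Y_j V_a is invertible for every i ∈ [k] and ∑_{i=1}^k ∑_{a∈𝒜_{ij}} V_a M_i^{-1} V_aᵀ = Y_j^{-1} for every j ∈ [m]. Moreover, for any such pair (V, Y), cap(V, p) = (∏_{i=1}^k det(M_i)) / (∏_{j=1}^m det(Y_j)^{p_j}). -/

import Mathlib

open Matrix BigOperators

/-- The value of the capacity functional of a quiver datum `(V, p)` at a tuple `Y`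
of `n j × n j` matrices. -/
noncomputable def capVal {k m : ℕ} {d : Fin k → ℕ} {n : Fin m → ℕ} {A : Fin k → Fin m → ℕ}
    (p : Fin m → ℝ)
    (V : ∀ i : Fin k, ∀ j : Fin m, Fin (A i j) → Matrix (Fin (n j)) (Fin (d i)) ℝ)
    (Y : ∀ j : Fin m, Matrix (Fin (n j)) (Fin (n j)) ℝ) : ℝ :=
  (∏ i : Fin k, (∑ j : Fin m, p j • ∑ a : Fin (A i j), (V i j a)ᵀ * Y j * V i j a).det) /
    ∏ j : Fin m, (Y j).det ^ (p j)

/-- The capacity `cap(V, p)` of a quiver datum: the infimum of the capacity functional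
over all tuples of positive definite matrices. -/
noncomputable def cap {k m : ℕ} {d : Fin k → ℕ} {n : Fin m → ℕ} {A : Fin k → Fin m → ℕ}
    (p : Fin m → ℝ)
    (V : ∀ i : Fin k, ∀ j : Fin m, Fin (A i j) → Matrix (Fin (n j)) (Fin (d i)) ℝ) : ℝ :=
  sInf { r : ℝ | ∃ Y : ∀ j : Fin m, Matrix (Fin (n j)) (Fin (n j)) ℝ,
    (∀ j, (Y j).PosDef) ∧ r = capVal p V Y }

/-- A quiver datum `(V, p)` is extremizable if it is feasible (`cap(V,p) > 0`) and the
infimum defining the capacity is attained at some tuple of positive definite matrices. -/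
def Extremizable {k m : ℕ} {d : Fin k → ℕ} {n : Fin m → ℕ} {A : Fin k → Fin m → ℕ}
    (p : Fin m → ℝ)
    (V : ∀ i : Fin k, ∀ j : Fin m, Fin (A i j) → Matrix (Fin (n j)) (Fin (d i)) ℝ) : Prop :=
  0 < cap p V ∧ ∃ Y : ∀ j : Fin m, Matrix (Fin (n j)) (Fin (n j)) ℝ,
    (∀ j, (Y j).PosDef) ∧ capVal p V Y = cap p V

/-- A quiver datum `(V, p)` is geometric. -/
def IsGeometric {k m : ℕ} {d : Fin k → ℕ} {n : Fin m → ℕ} {A : Fin k → Fin m → ℕ}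
    (p : Fin m → ℝ)
    (V : ∀ i : Fin k, ∀ j : Fin m, Fin (A i j) → Matrix (Fin (n j)) (Fin (d i)) ℝ) : Prop :=
  (∀ i, ∑ j : Fin m, p j • ∑ a : Fin (A i j), (V i j a)ᵀ * V i j a = 1) ∧
  (∀ j, ∑ i : Fin k, ∑ a : Fin (A i j), V i j a * (V i j a)ᵀ = 1)

/-!
The scaling equations are the critical point equations of `log (capVal p V)`: in the direction
`H` its derivative is `∑ j, p j * ((T j - (Y j)⁻¹) * H j).trace`, where
`T j = ∑ i, ∑ a, V i j a * (M i)⁻¹ * (V i j a)ᵀ`. Taking `H j = T j - (Y j)⁻¹` shows that a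
minimizer solves them.

Conversely, if `Y` solves them, multiplying `V` by `√(Y j)` at the target vertices and by
`√((M i)⁻¹)` at the source vertices gives a geometric datum and moves `Y` to the identity, while
the capacity functional only changes by a constant factor. For a geometric datum the identity is a
minimizer because `log` is concave: diagonalizing `∑ w • (Cᴴ * A * C)`, where `∑ w • (Cᴴ * C) = 1`,
each of its eigenvalues is a convex combination of eigenvalues of the matrices `A`, and Jensen's
inequality gives `∑ w • tr (Cᴴ * log A * C) ≤ log det (∑ w • (Cᴴ * A * C))`.
-/

section SpectralTrace

variable {𝕜 ι d : Type*} [RCLike 𝕜] [Fintype ι] [Fintype d]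
  {n : ι → Type*} [∀ x, Fintype (n x)]

lemma trace_eq_sum_dotProduct_mulVec (b : OrthonormalBasis d 𝕜 (EuclideanSpace 𝕜 d))
    (A : Matrix d d 𝕜) : A.trace = ∑ s, star (b s).ofLp ⬝ᵥ (A *ᵥ (b s).ofLp) := by
  classical
  calc A.trace = LinearMap.trace 𝕜 _ (toEuclideanLin A) := by
        rw [toEuclideanLin_eq_toLin_orthonormal, Matrix.trace_toLin_eq]
    _ = ∑ s, inner 𝕜 (b s) (toEuclideanLin A (b s)) := LinearMap.trace_eq_sum_inner _ b
    _ = ∑ s, star (b s).ofLp ⬝ᵥ (A *ᵥ (b s).ofLp) := by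
        simp only [EuclideanSpace.inner_eq_star_dotProduct, dotProduct_comm, ofLp_toLpLin,
          toLin'_apply]

lemma re_dotProduct_sum_conj_mulVec (w : ι → ℝ) (C : ∀ x, Matrix (n x) d 𝕜)
    (B : ∀ x, Matrix (n x) (n x) 𝕜) (u : d → 𝕜) :
    RCLike.re (star u ⬝ᵥ ((∑ x, w x • ((C x)ᴴ * B x * C x)) *ᵥ u)) =
      ∑ x, w x * RCLike.re (star (C x *ᵥ u) ⬝ᵥ (B x *ᵥ (C x *ᵥ u))) := by
  simp only [sum_mulVec, dotProduct_sum, map_sum, smul_mulVec, dotProduct_smul, RCLike.smul_re,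
    star_mulVec, ← dotProduct_mulVec, mulVec_mulVec, Matrix.mul_assoc]

lemma sum_re_dotProduct_mulVec_self [DecidableEq d] {w : ι → ℝ} {C : ∀ x, Matrix (n x) d 𝕜}
    (hC : ∑ x, w x • ((C x)ᴴ * C x) = 1) {u : EuclideanSpace 𝕜 d} (hu : ‖u‖ = 1) :
    ∑ x, w x * RCLike.re (star (C x *ᵥ u.ofLp) ⬝ᵥ (C x *ᵥ u.ofLp)) = 1 := by
  classical
  have h := re_dotProduct_sum_conj_mulVec w C (fun _ => 1) u.ofLp
  simp only [Matrix.mul_one, hC, one_mulVec] at h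
  rw [← h, dotProduct_comm, ← EuclideanSpace.inner_eq_star_dotProduct, inner_self_eq_norm_sq, hu,
    one_pow]

lemma isHermitian_sum_conj {d : Type*} (w : ι → ℝ) (C : ∀ x, Matrix (n x) d 𝕜)
    {A : ∀ x, Matrix (n x) (n x) 𝕜} (hA : ∀ x, (A x).IsHermitian) :
    (∑ x, w x • ((C x)ᴴ * A x * C x)).IsHermitian := by
  simp only [IsHermitian, conjTranspose_sum, conjTranspose_smul, conjTranspose_mul, star_trivial,
    conjTranspose_conjTranspose, (hA _).eq, Matrix.mul_assoc]

variable [DecidableEq d]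

lemma trace_cfc {A : Matrix d d 𝕜} (hA : A.IsHermitian) (f : ℝ → ℝ) :
    (cfc f A).trace = ∑ t, (f (hA.eigenvalues t) : 𝕜) := by
  rw [hA.cfc_eq, IsHermitian.cfc, Unitary.conjStarAlgAut_apply, trace_mul_cycle,
    Unitary.coe_star_mul_self, Matrix.one_mul, trace_diagonal]
  rfl

lemma re_dotProduct_cfc_mulVec {A : Matrix d d 𝕜} (hA : A.IsHermitian) (f : ℝ → ℝ) (v : d → 𝕜) :
    RCLike.re (star v ⬝ᵥ (cfc f A *ᵥ v)) =
      ∑ t, ‖(star (hA.eigenvectorUnitary : Matrix d d 𝕜) *ᵥ v) t‖ ^ 2 * f (hA.eigenvalues t) := by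
  rw [hA.cfc_eq, IsHermitian.cfc, Unitary.conjStarAlgAut_apply]
  set U : Matrix d d 𝕜 := (hA.eigenvectorUnitary : Matrix d d 𝕜)
  have hU : star v ᵥ* U = star (star U *ᵥ v) := by
    rw [star_mulVec, star_eq_conjTranspose, conjTranspose_conjTranspose]
  rw [← mulVec_mulVec, ← mulVec_mulVec, dotProduct_mulVec, hU]
  simp only [dotProduct, mulVec_diagonal, map_sum, Pi.star_apply, Function.comp_apply]
  refine Finset.sum_congr rfl fun t _ => ?_
  rw [mul_left_comm, ← starRingEnd_apply, RCLike.conj_mul, RCLike.re_ofReal_mul, mul_comm]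
  norm_cast

section Jensen

variable [∀ x, DecidableEq (n x)]

lemma exists_spectral_weights {A : ∀ x, Matrix (n x) (n x) 𝕜} (hA : ∀ x, (A x).IsHermitian)
    {w : ι → ℝ} (hw : ∀ x, 0 ≤ w x) {v : ∀ x, n x → 𝕜}
    (hv : ∑ x, w x * RCLike.re (star (v x) ⬝ᵥ v x) = 1) :
    ∃ ω : (Σ x, n x) → ℝ, (∀ y, 0 ≤ ω y) ∧ ∑ y, ω y = 1 ∧
      ∑ x, w x * RCLike.re (star (v x) ⬝ᵥ (A x *ᵥ v x)) =
        ∑ y, ω y • (hA y.1).eigenvalues y.2 ∧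
      ∀ f : ℝ → ℝ, ∑ x, w x * RCLike.re (star (v x) ⬝ᵥ (cfc f (A x) *ᵥ v x)) =
        ∑ y, ω y • f ((hA y.1).eigenvalues y.2) := by
  let ω : (Σ x, n x) → ℝ := fun y =>
    w y.1 * ‖(star ((hA y.1).eigenvectorUnitary : Matrix (n y.1) (n y.1) 𝕜) *ᵥ v y.1) y.2‖ ^ 2
  have expand (f : ℝ → ℝ) : ∑ x, w x * RCLike.re (star (v x) ⬝ᵥ (cfc f (A x) *ᵥ v x)) =
      ∑ y, ω y • f ((hA y.1).eigenvalues y.2) := by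
    simp only [Fintype.sum_sigma, ω, re_dotProduct_cfc_mulVec (hA _), Finset.mul_sum, mul_assoc,
      smul_eq_mul]
  have mass := expand fun _ => 1
  simp only [fun x => cfc_const_one ℝ (A x) (hA x).isSelfAdjoint, one_mulVec, smul_eq_mul,
    mul_one] at mass
  have mean := expand id
  simp only [fun x => cfc_id ℝ (A x) (hA x).isSelfAdjoint, id] at mean
  exact ⟨ω, fun y => mul_nonneg (hw _) (sq_nonneg _), mass.symm.trans hv, mean, expand⟩

lemma sum_re_dotProduct_mulVec_mem {s : Set ℝ} (hs : Convex ℝ s)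
    {A : ∀ x, Matrix (n x) (n x) 𝕜} (hA : ∀ x, (A x).IsHermitian)
    (hAs : ∀ x, spectrum ℝ (A x) ⊆ s) {w : ι → ℝ} (hw : ∀ x, 0 ≤ w x) {v : ∀ x, n x → 𝕜}
    (hv : ∑ x, w x * RCLike.re (star (v x) ⬝ᵥ v x) = 1) :
    ∑ x, w x * RCLike.re (star (v x) ⬝ᵥ (A x *ᵥ v x)) ∈ s := by
  obtain ⟨ω, hω, hω1, hmean, -⟩ := exists_spectral_weights hA hw hv
  rw [hmean]
  exact hs.sum_mem (fun y _ => hω y) hω1 fun y _ =>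
    hAs y.1 ((hA y.1).eigenvalues_mem_spectrum_real y.2)

lemma sum_re_dotProduct_cfc_mulVec_le {s : Set ℝ} {f : ℝ → ℝ} (hf : ConcaveOn ℝ s f)
    {A : ∀ x, Matrix (n x) (n x) 𝕜} (hA : ∀ x, (A x).IsHermitian)
    (hAs : ∀ x, spectrum ℝ (A x) ⊆ s) {w : ι → ℝ} (hw : ∀ x, 0 ≤ w x) {v : ∀ x, n x → 𝕜}
    (hv : ∑ x, w x * RCLike.re (star (v x) ⬝ᵥ v x) = 1) :
    ∑ x, w x * RCLike.re (star (v x) ⬝ᵥ (cfc f (A x) *ᵥ v x)) ≤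
      f (∑ x, w x * RCLike.re (star (v x) ⬝ᵥ (A x *ᵥ v x))) := by
  obtain ⟨ω, hω, hω1, hmean, hcfc⟩ := exists_spectral_weights hA hw hv
  rw [hmean, hcfc f]
  exact hf.le_map_sum (fun y _ => hω y) hω1 fun y _ =>
    hAs y.1 ((hA y.1).eigenvalues_mem_spectrum_real y.2)

theorem spectrum_sum_conj_subset {s : Set ℝ} (hs : Convex ℝ s)
    {A : ∀ x, Matrix (n x) (n x) 𝕜} (hA : ∀ x, (A x).IsHermitian)
    (hAs : ∀ x, spectrum ℝ (A x) ⊆ s) {w : ι → ℝ} (hw : ∀ x, 0 ≤ w x)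
    {C : ∀ x, Matrix (n x) d 𝕜} (hC : ∑ x, w x • ((C x)ᴴ * C x) = 1) :
    spectrum ℝ (∑ x, w x • ((C x)ᴴ * A x * C x)) ⊆ s := by
  have hM := isHermitian_sum_conj w C hA
  rw [hM.spectrum_real_eq_range_eigenvalues]
  rintro _ ⟨t, rfl⟩
  rw [hM.eigenvalues_eq, re_dotProduct_sum_conj_mulVec]
  exact sum_re_dotProduct_mulVec_mem hs hA hAs hw
    (sum_re_dotProduct_mulVec_self hC (hM.eigenvectorBasis.orthonormal.1 t))

/-- The trace form of the Hansen-Pedersen operator Jensen inequality. -/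
theorem sum_trace_conj_cfc_le {s : Set ℝ} {f : ℝ → ℝ} (hf : ConcaveOn ℝ s f)
    {A : ∀ x, Matrix (n x) (n x) 𝕜} (hA : ∀ x, (A x).IsHermitian)
    (hAs : ∀ x, spectrum ℝ (A x) ⊆ s) {w : ι → ℝ} (hw : ∀ x, 0 ≤ w x)
    {C : ∀ x, Matrix (n x) d 𝕜} (hC : ∑ x, w x • ((C x)ᴴ * C x) = 1) :
    RCLike.re (∑ x, w x • ((C x)ᴴ * cfc f (A x) * C x)).trace ≤
      RCLike.re (cfc f (∑ x, w x • ((C x)ᴴ * A x * C x))).trace := by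
  have hM := isHermitian_sum_conj w C hA
  have hunit t := sum_re_dotProduct_mulVec_self hC (hM.eigenvectorBasis.orthonormal.1 t)
  calc
    _ = ∑ t, ∑ x, w x * RCLike.re (star (C x *ᵥ (hM.eigenvectorBasis t).ofLp) ⬝ᵥ
          (cfc f (A x) *ᵥ (C x *ᵥ (hM.eigenvectorBasis t).ofLp))) := by
      simp only [trace_eq_sum_dotProduct_mulVec hM.eigenvectorBasis, map_sum,
        re_dotProduct_sum_conj_mulVec]
    _ ≤ ∑ t, f (hM.eigenvalues t) := by
      refine Finset.sum_le_sum fun t _ => ?_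
      rw [hM.eigenvalues_eq, re_dotProduct_sum_conj_mulVec]
      exact sum_re_dotProduct_cfc_mulVec_le hf hA hAs hw (hunit t)
    _ = RCLike.re (cfc f (∑ x, w x • ((C x)ᴴ * A x * C x))).trace := by
      simp only [trace_cfc hM, map_sum, RCLike.ofReal_re]

end Jensen

open scoped ComplexOrder

lemma trace_cfc_log {A : Matrix d d 𝕜} (hA : A.PosDef) :
    (cfc Real.log A).trace = (Real.log (RCLike.re A.det) : 𝕜) := by
  rw [trace_cfc hA.isHermitian, hA.isHermitian.det_eq_prod_eigenvalues]
  norm_cast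
  exact (Real.log_prod fun t _ => (hA.eigenvalues_pos t).ne').symm

lemma posDef_iff_spectrum {A : Matrix d d 𝕜} (hA : A.IsHermitian) :
    A.PosDef ↔ spectrum ℝ A ⊆ Set.Ioi 0 := by
  rw [hA.posDef_iff_eigenvalues_pos, hA.spectrum_real_eq_range_eigenvalues, Set.range_subset_iff]
  rfl

lemma posDef_sum_conj {d : Type*} [Finite d] [DecidableEq d]
    {A : ∀ x, Matrix (n x) (n x) 𝕜} (hA : ∀ x, (A x).PosDef)
    {w : ι → ℝ} (hw : ∀ x, 0 ≤ w x) {C : ∀ x, Matrix (n x) d 𝕜}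
    (hC : ∑ x, w x • ((C x)ᴴ * C x) = 1) :
    (∑ x, w x • ((C x)ᴴ * A x * C x)).PosDef := by
  classical
  cases nonempty_fintype d
  have hAh x := (hA x).isHermitian
  exact (posDef_iff_spectrum (isHermitian_sum_conj w C hAh)).mpr <|
    spectrum_sum_conj_subset (convex_Ioi 0) hAh (fun x => (posDef_iff_spectrum (hAh x)).mp (hA x))
      hw hC

theorem sum_trace_conj_log_le_log_det [∀ x, DecidableEq (n x)]
    {A : ∀ x, Matrix (n x) (n x) 𝕜} (hA : ∀ x, (A x).PosDef)
    {w : ι → ℝ} (hw : ∀ x, 0 ≤ w x) {C : ∀ x, Matrix (n x) d 𝕜}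
    (hC : ∑ x, w x • ((C x)ᴴ * C x) = 1) :
    RCLike.re (∑ x, w x • ((C x)ᴴ * cfc Real.log (A x) * C x)).trace ≤
      Real.log (RCLike.re (∑ x, w x • ((C x)ᴴ * A x * C x)).det) := by
  have h := sum_trace_conj_cfc_le strictConcaveOn_log_Ioi.concaveOn (fun x => (hA x).isHermitian)
    (fun x => (posDef_iff_spectrum (hA x).isHermitian).mp (hA x)) hw hC
  rwa [trace_cfc_log (posDef_sum_conj hA hw hC), RCLike.ofReal_re] at h

end SpectralTrace

section PosDefCalculus

variable {𝕜 d : Type*} [Fintype d] [DecidableEq d]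

lemma hasDerivAt_det_one_add_smul [NontriviallyNormedField 𝕜] (K : Matrix d d 𝕜) :
    HasDerivAt (fun t : 𝕜 => (1 + t • K).det) K.trace 0 := by
  have h := (det (1 + (Polynomial.X : Polynomial 𝕜) • K.map Polynomial.C)).hasDerivAt 0
  rw [derivative_det_one_add_X_smul] at h
  convert h using 2 with t
  rw [← Polynomial.coe_evalRingHom, RingHom.map_det]
  congr 1
  ext i j
  simpa [Matrix.one_apply, apply_ite] using mul_comm _ _

lemma hasDerivAt_det_add_smul [NontriviallyNormedField 𝕜] {M : Matrix d d 𝕜} (hM : IsUnit M.det)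
    (H : Matrix d d 𝕜) :
    HasDerivAt (fun t : 𝕜 => (M + t • H).det) (M.det * (M⁻¹ * H).trace) 0 := by
  have factor (t : 𝕜) : (M + t • H).det = M.det * (1 + t • (M⁻¹ * H)).det := by
    rw [← det_mul, Matrix.mul_add, Matrix.mul_one, Matrix.mul_smul,
      mul_nonsing_inv_cancel_left _ _ hM]
  simpa only [factor] using (hasDerivAt_det_one_add_smul (M⁻¹ * H)).const_mul M.det

lemma hasDerivAt_log_det_add_smul {M : Matrix d d ℝ} (hM : IsUnit M.det) (H : Matrix d d ℝ) :
    HasDerivAt (fun t : ℝ => Real.log (M + t • H).det) (M⁻¹ * H).trace 0 := by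
  have h := (hasDerivAt_det_add_smul hM H).log (by simpa using hM.ne_zero)
  rwa [zero_smul, add_zero, mul_div_cancel_left₀ _ hM.ne_zero] at h

open scoped ComplexOrder MatrixOrder in
lemma exists_posDef_sqrt [RCLike 𝕜] {A : Matrix d d 𝕜} (hA : A.PosDef) :
    ∃ R : Matrix d d 𝕜, R.PosDef ∧ R * R = A ∧ R * A⁻¹ * R = 1 := by
  have hR : (CFC.sqrt A).PosDef := isStrictlyPositive_iff_posDef.mp hA.isStrictlyPositive.sqrt
  have hRR : CFC.sqrt A * CFC.sqrt A = A := CFC.sqrt_mul_sqrt_self A hA.posSemidef.nonneg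
  have hdet : IsUnit (CFC.sqrt A).det := (isUnit_iff_isUnit_det _).mp hR.isUnit
  refine ⟨CFC.sqrt A, hR, hRR, ?_⟩
  nth_rw 2 [← hRR]
  rw [Matrix.mul_inv_rev, mul_nonsing_inv_cancel_left _ _ hdet, nonsing_inv_mul _ hdet]

end PosDefCalculus

section Perturbation

open scoped ComplexOrder Topology

variable {𝕜 d : Type*} [RCLike 𝕜] [Finite d]

lemma eventually_posDef_one_add_smul [DecidableEq d] {K : Matrix d d 𝕜} (hK : K.IsHermitian) :
    ∀ᶠ t : ℝ in 𝓝 0, (1 + t • K).PosDef := by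
  cases nonempty_fintype d
  have hpos : ∀ᶠ t : ℝ in 𝓝 0, ∀ x ∈ spectrum ℝ K, 0 < 1 + t * x := by
    rw [Filter.eventually_all_finite finite_real_spectrum]
    intro x _
    have hc : Continuous fun t : ℝ => 1 + t * x := by fun_prop
    exact hc.continuousAt.eventually (lt_mem_nhds (by simp))
  filter_upwards [hpos] with t ht
  have hcfc : cfc (fun x : ℝ => 1 + t * x) K = 1 + t • K := by
    rw [cfc_const_add 1 _ K, cfc_const_mul_id t K, map_one]
  have hherm : (1 + t • K).IsHermitian := isHermitian_one.add (hK.smul (IsSelfAdjoint.all t))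
  rw [posDef_iff_spectrum hherm, ← hcfc, cfc_map_spectrum _ K hK.isSelfAdjoint]
  rintro _ ⟨x, hx, rfl⟩
  exact ht x hx

lemma eventually_posDef_add_smul {M H : Matrix d d 𝕜} (hM : M.PosDef) (hH : H.IsHermitian) :
    ∀ᶠ t : ℝ in 𝓝 0, (M + t • H).PosDef := by
  classical
  cases nonempty_fintype d
  obtain ⟨S, hS, -, hSMS⟩ := exists_posDef_sqrt hM.inv
  rw [nonsing_inv_nonsing_inv _ ((isUnit_iff_isUnit_det _).mp hM.isUnit)] at hSMS
  have hK : (S * H * S).IsHermitian := by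
    simpa only [hS.isHermitian.eq] using isHermitian_conjTranspose_mul_mul S hH
  filter_upwards [eventually_posDef_one_add_smul hK] with t ht
  rw [← IsUnit.posDef_star_left_conjugate_iff hS.isUnit, star_eq_conjTranspose, hS.isHermitian.eq]
  rwa [Matrix.mul_add, Matrix.add_mul, hSMS, Matrix.mul_smul, Matrix.smul_mul]

end Perturbation

section Quiver

open scoped Topology

variable {k m : ℕ} {d : Fin k → ℕ} {n : Fin m → ℕ} {A : Fin k → Fin m → ℕ} {p : Fin m → ℝ}
  {V : ∀ i : Fin k, ∀ j : Fin m, Fin (A i j) → Matrix (Fin (n j)) (Fin (d i)) ℝ}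
  {Y Z : ∀ j, Matrix (Fin (n j)) (Fin (n j)) ℝ}

/-- The positive map `Y ↦ (M_i)` attached to a quiver datum: `sourceMatrix p V Y i` is the
matrix `M_i` whose determinant enters the capacity. -/
def sourceMatrix (p : Fin m → ℝ)
    (V : ∀ i : Fin k, ∀ j : Fin m, Fin (A i j) → Matrix (Fin (n j)) (Fin (d i)) ℝ)
    (Y : ∀ j, Matrix (Fin (n j)) (Fin (n j)) ℝ) (i : Fin k) : Matrix (Fin (d i)) (Fin (d i)) ℝ :=
  ∑ j, p j • ∑ a, (V i j a)ᵀ * Y j * V i j a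

/-- The adjoint of `sourceMatrix p V` for the trace pairings, the one on the target vertices being
weighted by `p`; see `sum_trace_mul_sourceMatrix`. -/
def targetMatrix (V : ∀ i : Fin k, ∀ j : Fin m, Fin (A i j) → Matrix (Fin (n j)) (Fin (d i)) ℝ)
    (X : ∀ i, Matrix (Fin (d i)) (Fin (d i)) ℝ) (j : Fin m) : Matrix (Fin (n j)) (Fin (n j)) ℝ :=
  ∑ i, ∑ a, V i j a * X i * (V i j a)ᵀ

/-- The change of coordinates of a quiver datum by `R` at the target vertices and by `S` at the
source vertices. -/
def rescale (R : ∀ j, Matrix (Fin (n j)) (Fin (n j)) ℝ)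
    (V : ∀ i : Fin k, ∀ j : Fin m, Fin (A i j) → Matrix (Fin (n j)) (Fin (d i)) ℝ)
    (S : ∀ i, Matrix (Fin (d i)) (Fin (d i)) ℝ) :
    ∀ i : Fin k, ∀ j : Fin m, Fin (A i j) → Matrix (Fin (n j)) (Fin (d i)) ℝ :=
  fun i j a => R j * V i j a * S i

/-- `Y` solves the matrix scaling equations of `(V, p)`, which are the critical point equations
of `log (capVal p V)` on the positive definite tuples. -/
def IsScalingSolution (p : Fin m → ℝ)
    (V : ∀ i : Fin k, ∀ j : Fin m, Fin (A i j) → Matrix (Fin (n j)) (Fin (d i)) ℝ)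
    (Y : ∀ j, Matrix (Fin (n j)) (Fin (n j)) ℝ) : Prop :=
  (∀ j, (Y j).PosDef) ∧ (∀ i, IsUnit (sourceMatrix p V Y i).det) ∧
    ∀ j, targetMatrix V (fun i => (sourceMatrix p V Y i)⁻¹) j = (Y j)⁻¹

lemma capVal_eq_prod_det_div : capVal p V Y =
    (∏ i, (sourceMatrix p V Y i).det) / ∏ j, (Y j).det ^ p j :=
  rfl

lemma sourceMatrix_eq_sum_sigma (i : Fin k) : sourceMatrix p V Y i =
    ∑ y : Σ j, Fin (A i j), p y.1 • ((V i y.1 y.2)ᴴ * Y y.1 * V i y.1 y.2) := by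
  simp only [sourceMatrix, Fintype.sum_sigma, Finset.smul_sum,
    conjTranspose_eq_transpose_of_trivial]

lemma sourceMatrix_isHermitian (hY : ∀ j, (Y j).IsHermitian) (i : Fin k) :
    (sourceMatrix p V Y i).IsHermitian := by
  rw [sourceMatrix_eq_sum_sigma]
  exact isHermitian_sum_conj (fun y : Σ j, Fin (A i j) => p y.1) _ fun y => hY y.1

lemma sourceMatrix_posSemidef (hp : ∀ j, 0 ≤ p j) (hY : ∀ j, (Y j).PosSemidef) (i : Fin k) :
    (sourceMatrix p V Y i).PosSemidef := by
  rw [sourceMatrix_eq_sum_sigma]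
  exact posSemidef_sum _ fun y _ => ((hY y.1).conjTranspose_mul_mul_same _).smul (hp y.1)

lemma sourceMatrix_posDef (hp : ∀ j, 0 ≤ p j) (hY : ∀ j, (Y j).PosSemidef)
    (hM : ∀ i, IsUnit (sourceMatrix p V Y i).det) (i : Fin k) : (sourceMatrix p V Y i).PosDef :=
  (sourceMatrix_posSemidef hp hY i).posDef_iff_isUnit.mpr ((isUnit_iff_isUnit_det _).mpr (hM i))

lemma sourceMatrix_add_smul (H : ∀ j, Matrix (Fin (n j)) (Fin (n j)) ℝ) (t : ℝ) (i : Fin k) :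
    sourceMatrix p V (fun j => Y j + t • H j) i =
      sourceMatrix p V Y i + t • sourceMatrix p V H i := by
  simp only [sourceMatrix, Matrix.mul_add, Matrix.add_mul, Matrix.mul_smul, Matrix.smul_mul,
    Finset.sum_add_distrib, smul_add, Finset.smul_sum, smul_comm t]

lemma targetMatrix_isHermitian {X : ∀ i, Matrix (Fin (d i)) (Fin (d i)) ℝ}
    (hX : ∀ i, (X i).IsHermitian) (j : Fin m) : (targetMatrix V X j).IsHermitian := by
  simp only [targetMatrix, ← conjTranspose_eq_transpose_of_trivial, IsHermitian, conjTranspose_sum,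
    conjTranspose_mul, conjTranspose_conjTranspose, (hX _).eq, Matrix.mul_assoc]

lemma sum_trace_mul_sourceMatrix (X : ∀ i, Matrix (Fin (d i)) (Fin (d i)) ℝ)
    (H : ∀ j, Matrix (Fin (n j)) (Fin (n j)) ℝ) :
    ∑ i, (X i * sourceMatrix p V H i).trace = ∑ j, p j * (targetMatrix V X j * H j).trace := by
  have cycle (i j) (a : Fin (A i j)) : (X i * ((V i j a)ᵀ * H j * V i j a)).trace =
      (V i j a * X i * (V i j a)ᵀ * H j).trace := by
    rw [← Matrix.mul_assoc, trace_mul_comm]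
    simp only [Matrix.mul_assoc]
  simp only [sourceMatrix, targetMatrix, Matrix.sum_mul, Matrix.mul_smul,
    trace_sum, trace_smul, smul_eq_mul, Finset.mul_sum, cycle]
  exact Finset.sum_comm

lemma prod_det_rpow_pos (hY : ∀ j, (Y j).PosDef) : 0 < ∏ j, (Y j).det ^ p j :=
  Finset.prod_pos fun j _ => Real.rpow_pos_of_pos (hY j).det_pos _

lemma capVal_nonneg (hp : ∀ j, 0 ≤ p j) (hY : ∀ j, (Y j).PosDef) : 0 ≤ capVal p V Y :=
  div_nonneg
    (Finset.prod_nonneg fun i _ =>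
      (sourceMatrix_posSemidef hp (fun j => (hY j).posSemidef) i).det_nonneg)
    (prod_det_rpow_pos hY).le

lemma capVal_pos_iff (hp : ∀ j, 0 ≤ p j) (hY : ∀ j, (Y j).PosDef) :
    0 < capVal p V Y ↔ ∀ i, IsUnit (sourceMatrix p V Y i).det := by
  rw [(capVal_nonneg hp hY).lt_iff_ne', capVal_eq_prod_det_div,
    div_ne_zero_iff, and_iff_left (prod_det_rpow_pos hY).ne', Finset.prod_ne_zero_iff]
  simp only [Finset.mem_univ, true_imp_iff, isUnit_iff_ne_zero]

lemma log_capVal (hY : ∀ j, (Y j).PosDef) (hM : ∀ i, IsUnit (sourceMatrix p V Y i).det) :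
    Real.log (capVal p V Y) =
      ∑ i, Real.log (sourceMatrix p V Y i).det - ∑ j, p j * Real.log (Y j).det := by
  rw [capVal_eq_prod_det_div, Real.log_div (Finset.prod_ne_zero_iff.mpr fun i _ => (hM i).ne_zero)
    (prod_det_rpow_pos hY).ne', Real.log_prod fun i _ => (hM i).ne_zero,
    Real.log_prod fun j _ => (Real.rpow_pos_of_pos (hY j).det_pos _).ne']
  simp only [Real.log_rpow (hY _).det_pos]

lemma isGeometric_iff : IsGeometric p V ↔
    (∀ i, sourceMatrix p V (fun _ => 1) i = 1) ∧ ∀ j, targetMatrix V (fun _ => 1) j = 1 := by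
  simp only [IsGeometric, sourceMatrix, targetMatrix, Matrix.mul_one]

namespace IsGeometric

lemma sum_smul_conjTranspose_mul_self (hV : IsGeometric p V) (i : Fin k) :
    ∑ y : Σ j, Fin (A i j), p y.1 • ((V i y.1 y.2)ᴴ * V i y.1 y.2) = 1 := by
  have h := sourceMatrix_eq_sum_sigma (p := p) (V := V) (Y := fun _ => 1) i
  rw [(isGeometric_iff.mp hV).1 i] at h
  simpa only [Matrix.mul_one] using h.symm

lemma sourceMatrix_posDef (hV : IsGeometric p V) (hp : ∀ j, 0 ≤ p j) (hZ : ∀ j, (Z j).PosDef)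
    (i : Fin k) : (sourceMatrix p V Z i).PosDef := by
  rw [sourceMatrix_eq_sum_sigma]
  exact posDef_sum_conj (fun y : Σ j, Fin (A i j) => hZ y.1) (fun y => hp y.1)
    (hV.sum_smul_conjTranspose_mul_self i)

lemma sum_log_det_le (hV : IsGeometric p V) (hp : ∀ j, 0 ≤ p j) (hZ : ∀ j, (Z j).PosDef) :
    ∑ j, p j * Real.log (Z j).det ≤ ∑ i, Real.log (sourceMatrix p V Z i).det := by
  calc
    _ = ∑ j, p j * (targetMatrix V (fun _ => 1) j * cfc Real.log (Z j)).trace := by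
      simp only [(isGeometric_iff.mp hV).2, Matrix.one_mul, trace_cfc_log (hZ _), RCLike.re_to_real,
        RCLike.ofReal_real_eq_id, id]
    _ = ∑ i, (sourceMatrix p V (fun j => cfc Real.log (Z j)) i).trace := by
      simp only [← sum_trace_mul_sourceMatrix, Matrix.one_mul]
    _ ≤ ∑ i, Real.log (sourceMatrix p V Z i).det := by
      refine Finset.sum_le_sum fun i _ => ?_
      simp only [sourceMatrix_eq_sum_sigma]
      exact sum_trace_conj_log_le_log_det (fun y : Σ j, Fin (A i j) => hZ y.1)
        (fun y => hp y.1) (hV.sum_smul_conjTranspose_mul_self i)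

theorem isMinOn_capVal (hV : IsGeometric p V) (hp : ∀ j, 0 ≤ p j) :
    IsMinOn (capVal p V) {Z | ∀ j, (Z j).PosDef} fun _ => 1 := by
  intro Z hZ
  have hM i : IsUnit (sourceMatrix p V Z i).det :=
    (isUnit_iff_isUnit_det _).mp (hV.sourceMatrix_posDef hp hZ i).isUnit
  have hlog : 0 ≤ Real.log (capVal p V Z) := by
    rw [log_capVal hZ hM]
    exact sub_nonneg.mpr (hV.sum_log_det_le hp hZ)
  have hone : capVal p V (fun _ => 1) = 1 := by
    simp only [capVal_eq_prod_det_div, (isGeometric_iff.mp hV).1, det_one, Real.one_rpow,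
      Finset.prod_const_one, div_one]
  change capVal p V (fun _ => 1) ≤ capVal p V Z
  rw [hone]
  exact (Real.log_nonneg_iff ((capVal_pos_iff hp hZ).mpr hM)).mp hlog

end IsGeometric

lemma sourceMatrix_rescale (R : ∀ j, Matrix (Fin (n j)) (Fin (n j)) ℝ)
    (S : ∀ i, Matrix (Fin (d i)) (Fin (d i)) ℝ) (i : Fin k) :
    sourceMatrix p (rescale R V S) Z i =
      (S i)ᵀ * sourceMatrix p V (fun j => (R j)ᵀ * Z j * R j) i * S i := by
  simp only [sourceMatrix, rescale, transpose_mul, Matrix.mul_sum, Matrix.sum_mul, Matrix.mul_smul,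
    Matrix.smul_mul, Matrix.mul_assoc]

lemma targetMatrix_rescale (R : ∀ j, Matrix (Fin (n j)) (Fin (n j)) ℝ)
    (S X : ∀ i, Matrix (Fin (d i)) (Fin (d i)) ℝ) (j : Fin m) :
    targetMatrix (rescale R V S) X j =
      R j * targetMatrix V (fun i => S i * X i * (S i)ᵀ) j * (R j)ᵀ := by
  simp only [targetMatrix, rescale, transpose_mul, Matrix.mul_sum, Matrix.sum_mul, Matrix.mul_assoc]

lemma prod_sq_det_rpow_pos (p : Fin m → ℝ) {R : ∀ j, Matrix (Fin (n j)) (Fin (n j)) ℝ}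
    (hR : ∀ j, IsUnit (R j)) : 0 < ∏ j, ((R j).det ^ 2) ^ p j :=
  Finset.prod_pos fun j _ =>
    Real.rpow_pos_of_pos (sq_pos_of_ne_zero ((isUnit_iff_isUnit_det _).mp (hR j)).ne_zero) _

lemma capVal_rescale {R : ∀ j, Matrix (Fin (n j)) (Fin (n j)) ℝ} (hR : ∀ j, IsUnit (R j))
    (S : ∀ i, Matrix (Fin (d i)) (Fin (d i)) ℝ) (hZ : ∀ j, (Z j).PosSemidef) :
    capVal p (rescale R V S) Z = (∏ i, (S i).det ^ 2) * (∏ j, ((R j).det ^ 2) ^ p j) *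
      capVal p V fun j => (R j)ᵀ * Z j * R j := by
  have hRpos := prod_sq_det_rpow_pos p hR
  have hsource i : (sourceMatrix p (rescale R V S) Z i).det =
      (S i).det ^ 2 * (sourceMatrix p V (fun j => (R j)ᵀ * Z j * R j) i).det := by
    rw [sourceMatrix_rescale, det_mul, det_mul, det_transpose]
    ring
  have htarget j : ((R j)ᵀ * Z j * R j).det ^ p j =
      ((R j).det ^ 2) ^ p j * (Z j).det ^ p j := by
    rw [← Real.mul_rpow (sq_nonneg _) (hZ j).det_nonneg, det_mul, det_mul, det_transpose]
    ring_nf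
  simp only [capVal_eq_prod_det_div, hsource, htarget, Finset.prod_mul_distrib]
  field_simp

lemma isMinOn_capVal_of_rescale {R : ∀ j, Matrix (Fin (n j)) (Fin (n j)) ℝ}
    {S : ∀ i, Matrix (Fin (d i)) (Fin (d i)) ℝ} (hR : ∀ j, IsUnit (R j)) (hS : ∀ i, IsUnit (S i))
    (hZ : ∀ j, (Z j).PosSemidef)
    (hmin : IsMinOn (capVal p (rescale R V S)) {W | ∀ j, (W j).PosDef} Z) :
    IsMinOn (capVal p V) {W | ∀ j, (W j).PosDef} fun j => (R j)ᵀ * Z j * R j := by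
  have hconst : 0 < (∏ i, (S i).det ^ 2) * ∏ j, ((R j).det ^ 2) ^ p j :=
    mul_pos
      (Finset.prod_pos fun i _ => sq_pos_of_ne_zero ((isUnit_iff_isUnit_det _).mp (hS i)).ne_zero)
      (prod_sq_det_rpow_pos p hR)
  intro W hW
  change capVal p V (fun j => (R j)ᵀ * Z j * R j) ≤ capVal p V W
  have hW' j : (((R j)⁻¹)ᵀ * W j * (R j)⁻¹).PosDef := by
    rw [← conjTranspose_eq_transpose_of_trivial, ← star_eq_conjTranspose,
      IsUnit.posDef_star_left_conjugate_iff (isUnit_nonsing_inv_iff.mpr (hR j))]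
    exact hW j
  have hWW' j : (R j)ᵀ * (((R j)⁻¹)ᵀ * W j * (R j)⁻¹) * R j = W j := by
    have hdet := (isUnit_iff_isUnit_det _).mp (hR j)
    simp only [Matrix.mul_assoc, nonsing_inv_mul _ hdet, Matrix.mul_one]
    rw [← Matrix.mul_assoc, ← transpose_mul, nonsing_inv_mul _ hdet, transpose_one, Matrix.one_mul]
  have h : capVal p (rescale R V S) Z ≤
      capVal p (rescale R V S) fun j => ((R j)⁻¹)ᵀ * W j * (R j)⁻¹ := hmin hW'
  rw [capVal_rescale hR S hZ,
    capVal_rescale hR S fun j => (hW' j).posSemidef] at h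
  simpa only [hWW'] using le_of_mul_le_mul_left h hconst

namespace IsScalingSolution

lemma exists_isGeometric_rescale (hp : ∀ j, 0 ≤ p j) (hY : IsScalingSolution p V Y) :
    ∃ (R : ∀ j, Matrix (Fin (n j)) (Fin (n j)) ℝ) (S : ∀ i, Matrix (Fin (d i)) (Fin (d i)) ℝ),
      (∀ j, IsUnit (R j)) ∧ (∀ i, IsUnit (S i)) ∧ (∀ j, (R j)ᵀ * R j = Y j) ∧
        IsGeometric p (rescale R V S) := by
  obtain ⟨hYpos, hM, hT⟩ := hY
  have hMpos := sourceMatrix_posDef hp (fun j => (hYpos j).posSemidef) hM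
  choose R hR hRR hRYR using fun j => exists_posDef_sqrt (hYpos j)
  choose S hS hSS hSMS using fun i => exists_posDef_sqrt (hMpos i).inv
  have hRt j : (R j)ᵀ = R j := (hR j).isHermitian
  have hSt i : (S i)ᵀ = S i := (hS i).isHermitian
  refine ⟨R, S, fun j => (hR j).isUnit, fun i => (hS i).isUnit, fun j => by rw [hRt, hRR],
    isGeometric_iff.mpr ⟨fun i => ?_, fun j => ?_⟩⟩
  · simpa only [sourceMatrix_rescale, hRt, hSt, Matrix.mul_one, hRR,
      nonsing_inv_nonsing_inv _ (hM i)] using hSMS i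
  · simp only [targetMatrix_rescale, hRt, hSt, Matrix.mul_one, hSS, hT, hRYR]

theorem isMinOn_capVal (hp : ∀ j, 0 ≤ p j) (hY : IsScalingSolution p V Y) :
    IsMinOn (capVal p V) {Z | ∀ j, (Z j).PosDef} Y := by
  obtain ⟨R, S, hR, hS, hRY, hgeom⟩ := hY.exists_isGeometric_rescale hp
  simpa only [Matrix.mul_one, hRY] using
    isMinOn_capVal_of_rescale hR hS (fun _ => PosSemidef.one) (hgeom.isMinOn_capVal hp)

end IsScalingSolution

lemma hasDerivAt_log_capVal (hp : ∀ j, 0 ≤ p j) (hY : ∀ j, (Y j).PosDef)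
    (hM : ∀ i, IsUnit (sourceMatrix p V Y i).det) {H : ∀ j, Matrix (Fin (n j)) (Fin (n j)) ℝ}
    (hH : ∀ j, (H j).IsHermitian) :
    HasDerivAt (fun t : ℝ => Real.log (capVal p V fun j => Y j + t • H j))
      (∑ j, p j * ((targetMatrix V (fun i => (sourceMatrix p V Y i)⁻¹) j - (Y j)⁻¹) * H j).trace)
      0 := by
  have hMpos := sourceMatrix_posDef hp (fun j => (hY j).posSemidef) hM
  have hsource : HasDerivAt (fun t : ℝ => ∑ i, Real.log (sourceMatrix p V Y i +
      t • sourceMatrix p V H i).det) (∑ i, ((sourceMatrix p V Y i)⁻¹ * sourceMatrix p V H i).trace)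
      0 := HasDerivAt.fun_sum fun i _ => hasDerivAt_log_det_add_smul (hM i) _
  have htarget : HasDerivAt (fun t : ℝ => ∑ j, p j * Real.log (Y j + t • H j).det)
      (∑ j, p j * ((Y j)⁻¹ * H j).trace) 0 := HasDerivAt.fun_sum fun j _ =>
    (hasDerivAt_log_det_add_smul ((isUnit_iff_isUnit_det _).mp (hY j).isUnit) _).const_mul _
  have h := hsource.sub htarget
  rw [sum_trace_mul_sourceMatrix, ← Finset.sum_sub_distrib] at h
  simp only [← mul_sub, ← trace_sub, ← Matrix.sub_mul] at h
  refine h.congr_of_eventuallyEq ?_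
  filter_upwards [Filter.eventually_all.mpr fun j => eventually_posDef_add_smul (hY j) (hH j),
    Filter.eventually_all.mpr fun i =>
      eventually_posDef_add_smul (hMpos i) (sourceMatrix_isHermitian hH i)] with t hYt hMt
  rw [log_capVal hYt fun i => ?_]
  · simp only [sourceMatrix_add_smul, Pi.sub_apply]
  · rw [sourceMatrix_add_smul, ← isUnit_iff_isUnit_det]
    exact (hMt i).isUnit

theorem targetMatrix_eq_inv_of_isMinOn_capVal (hp : ∀ j, 0 < p j) (hY : ∀ j, (Y j).PosDef)
    (hM : ∀ i, IsUnit (sourceMatrix p V Y i).det)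
    (hmin : IsMinOn (capVal p V) {Z | ∀ j, (Z j).PosDef} Y) (j : Fin m) :
    targetMatrix V (fun i => (sourceMatrix p V Y i)⁻¹) j = (Y j)⁻¹ := by
  have hp' j : 0 ≤ p j := (hp j).le
  let G j := targetMatrix V (fun i => (sourceMatrix p V Y i)⁻¹) j - (Y j)⁻¹
  have hG j : (G j).IsHermitian :=
    (targetMatrix_isHermitian
      (fun i => (sourceMatrix_isHermitian (fun j => (hY j).isHermitian) i).inv) j).sub
      (hY j).isHermitian.inv
  have hlocal : IsLocalMin (fun t : ℝ => Real.log (capVal p V fun j => Y j + t • G j)) 0 := by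
    filter_upwards [Filter.eventually_all.mpr fun j => eventually_posDef_add_smul (hY j) (hG j)]
      with t hYt
    simp only [zero_smul, add_zero]
    exact Real.log_le_log ((capVal_pos_iff hp' hY).mpr hM) (hmin hYt)
  have hsum : ∑ j, p j * ((G j)ᴴ * G j).trace = 0 := by
    simpa only [(hG _).eq] using hlocal.hasDerivAt_eq_zero (hasDerivAt_log_capVal hp' hY hM hG)
  have hnonneg j : 0 ≤ p j * ((G j)ᴴ * G j).trace :=
    mul_nonneg (hp' j) (posSemidef_conjTranspose_mul_self _).trace_nonneg
  have hj := (Finset.sum_eq_zero_iff_of_nonneg fun j _ => hnonneg j).mp hsum j (Finset.mem_univ j)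
  exact sub_eq_zero.mp <|
    trace_conjTranspose_mul_self_eq_zero_iff.mp ((mul_eq_zero_iff_left (hp j).ne').mp hj)

theorem isScalingSolution_iff (hp : ∀ j, 0 < p j) : IsScalingSolution p V Y ↔
    (∀ j, (Y j).PosDef) ∧ 0 < capVal p V Y ∧
      IsMinOn (capVal p V) {Z | ∀ j, (Z j).PosDef} Y := by
  have hp' j : 0 ≤ p j := (hp j).le
  constructor
  · intro hY
    exact ⟨hY.1, (capVal_pos_iff hp' hY.1).mpr hY.2.1, hY.isMinOn_capVal hp'⟩
  · rintro ⟨hY, hpos, hmin⟩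
    have hM := (capVal_pos_iff hp' hY).mp hpos
    exact ⟨hY, hM, targetMatrix_eq_inv_of_isMinOn_capVal hp hY hM hmin⟩

lemma cap_le_capVal (hp : ∀ j, 0 ≤ p j) (hY : ∀ j, (Y j).PosDef) : cap p V ≤ capVal p V Y := by
  refine csInf_le ⟨0, ?_⟩ ⟨Y, hY, rfl⟩
  rintro _ ⟨Z, hZ, rfl⟩
  exact capVal_nonneg hp hZ

lemma cap_eq_capVal_iff_isMinOn (hp : ∀ j, 0 ≤ p j) (hY : ∀ j, (Y j).PosDef) :
    cap p V = capVal p V Y ↔ IsMinOn (capVal p V) {Z | ∀ j, (Z j).PosDef} Y := by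
  constructor
  · intro h Z hZ
    exact h.symm.trans_le (cap_le_capVal hp hZ)
  · intro hmin
    refine (cap_le_capVal hp hY).antisymm (le_csInf ⟨_, Y, hY, rfl⟩ ?_)
    rintro _ ⟨Z, hZ, rfl⟩
    exact hmin hZ

theorem extremizable_iff_scaling_solution_general (hp : ∀ j, 0 < p j)
    (V : ∀ i : Fin k, ∀ j : Fin m, Fin (A i j) → Matrix (Fin (n j)) (Fin (d i)) ℝ) :
    (Extremizable p V ↔ ∃ Y, IsScalingSolution p V Y) ∧
      ∀ Y, IsScalingSolution p V Y → cap p V = capVal p V Y := by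
  have hp' j : 0 ≤ p j := (hp j).le
  have hcap Y (hY : IsScalingSolution p V Y) : cap p V = capVal p V Y :=
    (cap_eq_capVal_iff_isMinOn hp' hY.1).mpr (hY.isMinOn_capVal hp')
  refine ⟨⟨?_, ?_⟩, hcap⟩
  · rintro ⟨hpos, Y, hY, hattained⟩
    exact ⟨Y, (isScalingSolution_iff hp).mpr
      ⟨hY, hattained ▸ hpos, (cap_eq_capVal_iff_isMinOn hp' hY).mp hattained.symm⟩⟩
  · rintro ⟨Y, hY⟩
    exact ⟨hcap Y hY ▸ ((isScalingSolution_iff hp).mp hY).2.1, Y, hY.1, (hcap Y hY).symm⟩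

end Quiver

/-- `(V, p)` is extremizable iff there is a tuple `Y` of positive definite
matrices such that each `M_i := ∑_j p_j ∑_a V_aᵀ Y_j V_a` is invertible and
`∑_i ∑_a V_a M_i⁻¹ V_aᵀ = Y_j⁻¹` for all `j`; moreover, for any such `Y`,
`cap(V, p) = (∏_i det M_i) / (∏_j det(Y_j)^{p_j})`. -/
theorem extremizable_iff_scaling_solution {k m : ℕ} (hk : 0 < k) (hm : 0 < m)
    {d : Fin k → ℕ} {n : Fin m → ℕ} {A : Fin k → Fin m → ℕ} {p : Fin m → ℝ}
    (hd : ∀ i, 0 < d i) (hn : ∀ j, 0 < n j) (hp : ∀ j, 0 < p j)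
    (hbal : ∑ i : Fin k, (d i : ℝ) = ∑ j : Fin m, p j * (n j : ℝ))
    (V : ∀ i : Fin k, ∀ j : Fin m, Fin (A i j) → Matrix (Fin (n j)) (Fin (d i)) ℝ) :
    (Extremizable p V ↔
      ∃ Y : ∀ j : Fin m, Matrix (Fin (n j)) (Fin (n j)) ℝ,
        (∀ j, (Y j).PosDef) ∧
        (∀ i, IsUnit (∑ j : Fin m, p j • ∑ a : Fin (A i j), (V i j a)ᵀ * Y j * V i j a).det) ∧
        (∀ j, ∑ i : Fin k, ∑ a : Fin (A i j),
            V i j a * (∑ j' : Fin m, p j' • ∑ a' : Fin (A i j'), (V i j' a')ᵀ * Y j' * V i j' a')⁻¹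
              * (V i j a)ᵀ = (Y j)⁻¹)) ∧
    (∀ Y : ∀ j : Fin m, Matrix (Fin (n j)) (Fin (n j)) ℝ,
      (∀ j, (Y j).PosDef) →
      (∀ i, IsUnit (∑ j : Fin m, p j • ∑ a : Fin (A i j), (V i j a)ᵀ * Y j * V i j a).det) →
      (∀ j, ∑ i : Fin k, ∑ a : Fin (A i j),
          V i j a * (∑ j' : Fin m, p j' • ∑ a' : Fin (A i j'), (V i j' a')ᵀ * Y j' * V i j' a')⁻¹
            * (V i j a)ᵀ = (Y j)⁻¹) →
      cap p V = (∏ i : Fin k, (∑ j : Fin m, p j • ∑ a : Fin (A i j), (V i j a)ᵀ * Y j * V i j a).det)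
          / (∏ j : Fin m, (Y j).det ^ (p j))) :=
  ⟨(extremizable_iff_scaling_solution_general hp V).1, fun Y hY hM hT =>
    (extremizable_iff_scaling_solution_general hp V).2 Y ⟨hY, hM, hT⟩⟩
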